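/- arXiv:1302.6298 — 3 statements merged into one kernel-verified Lean document; each statement's English description precedes it below -/
import Mathlib

section
/- Let k, a⁺, a⁻ be the K-linear operators on the Fock space F defined by k|m⟩ = q^m|m⟩, a⁺|m⟩ = |m+1⟩, a⁻|m⟩ = (1 − q^{2m})|m−1⟩ (with a⁻|0⟩ = 0), and let α, μ ∈ K be nonzero. Set t₁₁ = μ a⁻, t₁₂ = α k, t₂₁ = −q α⁻¹ k, t₂₂ = μ⁻¹ a⁺. Then these operators satisfy the defining relations of the quantized algebra of functions A_q(A₁): t₁₁t₂₁ = q t₂₁t₁₁, t₁₂t₂₂ = q t₂₂t₁₂, t₁₁t₁₂ = q t₁₂t₁₁, t₂₁t₂₂ = q t₂₂t₂₁, t₁₂t₂₁ = t₂₁t₁₂, t₁₁t₂₂ − t₂₂t₁₁ = (q − q⁻¹) t₂₁t₁₂, and t₁₁t₂₂ − q t₁₂t₂₁ = 1. -/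
/-!
The defining relations of `A_q(A₁)` follow from those of the `q`-oscillator algebra,
`k a⁺ = q a⁺ k`, `a⁻ k = q k a⁻`, `a⁺ a⁻ = 1 - k²` and `a⁻ a⁺ = 1 - q² k²`: both `t₁₂` and `t₂₁` are
multiples of `k`, with `t₁₂ t₂₁ = -q k²`, and the parameters `α`, `μ` cancel from every relation.
-/

noncomputable section

/-- The base field `K = ℚ(q)`, rational functions over `ℚ`. -/
abbrev K : Type := RatFunc ℚ

/-- The indeterminate `q`. -/
def q : K := RatFunc.X

/-- The Fock space `F` with basis `|m⟩, m ∈ ℕ`. -/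
abbrev F : Type := ℕ →₀ K

/-- The basis vector `|m⟩`. -/
def ket (m : ℕ) : F := Finsupp.single m 1

/-- The operator `k : |m⟩ ↦ q^m |m⟩`. -/
def opK : Module.End K F := Finsupp.lift F K ℕ fun m => (q ^ m) • ket m

/-- The operator `a⁺ : |m⟩ ↦ |m+1⟩`. -/
def opAp : Module.End K F := Finsupp.lift F K ℕ fun m => ket (m + 1)

/-- The operator `a⁻ : |m⟩ ↦ (1 - q^{2m}) |m-1⟩` (so `a⁻|0⟩ = 0`). -/
def opAm : Module.End K F := Finsupp.lift F K ℕ fun m => (1 - q ^ (2 * m)) • ket (m - 1)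

section QOscillator

variable {R 𝕜 A : Type*}

/-- `k`, `ap` (creation) and `am` (annihilation) satisfy the relations of the oscillator algebra
with deformation parameter `p`, normalised as for the Fock operators `k`, `a⁺`, `a⁻`. -/
structure IsQOscillator [CommRing R] [Ring A] [Algebra R A] (p : R) (k ap am : A) : Prop where
  k_mul_ap : k * ap = p • (ap * k)
  am_mul_k : am * k = p • (k * am)
  ap_mul_am : ap * am = 1 - k * k
  am_mul_ap : am * ap = 1 - p ^ 2 • (k * k)

theorem smul_mul_smul_eq_smul_of_mul_eq_smul [CommSemiring R] [Semiring A] [Algebra R A]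
    {p : R} {a b : A} (h : a * b = p • (b * a)) (x y : R) :
    (x • a) * (y • b) = p • ((y • b) * (x • a)) := by
  rw [smul_mul_smul_comm, smul_mul_smul_comm, h, smul_comm, mul_comm]

theorem smul_mul_inv_smul₀ [Semifield 𝕜] [Semiring A] [Algebra 𝕜 A] {x : 𝕜} (hx : x ≠ 0)
    (a b : A) : (x • a) * (x⁻¹ • b) = a * b := by
  rw [smul_mul_smul_comm, mul_inv_cancel₀ hx, one_smul]

theorem inv_smul_mul_smul₀ [Semifield 𝕜] [Semiring A] [Algebra 𝕜 A] {x : 𝕜} (hx : x ≠ 0)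
    (a b : A) : (x⁻¹ • a) * (x • b) = a * b := by
  rw [smul_mul_smul_comm, inv_mul_cancel₀ hx, one_smul]

theorem IsQOscillator.am_mul_ap_sub_ap_mul_am [CommRing R] [Ring A] [Algebra R A] {p : R}
    {k ap am : A} (h : IsQOscillator p k ap am) :
    am * ap - ap * am = (1 - p ^ 2) • (k * k) := by
  rw [h.am_mul_ap, h.ap_mul_am, sub_smul, one_smul]
  abel

theorem statement1_general [Field 𝕜] [Ring A] [Algebra 𝕜 A] {p α μ : 𝕜} {k ap am : A}
    (h : IsQOscillator p k ap am) (hp : p ≠ 0) (hα : α ≠ 0) (hμ : μ ≠ 0)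
    {t11 t12 t21 t22 : A} (h11 : t11 = μ • am) (h12 : t12 = α • k)
    (h21 : t21 = (-(p * α⁻¹)) • k) (h22 : t22 = μ⁻¹ • ap) :
    t11 * t21 = p • (t21 * t11) ∧
    t12 * t22 = p • (t22 * t12) ∧
    t11 * t12 = p • (t12 * t11) ∧
    t21 * t22 = p • (t22 * t21) ∧
    t12 * t21 = t21 * t12 ∧
    t11 * t22 - t22 * t11 = (p - p⁻¹) • (t21 * t12) ∧
    t11 * t22 - p • (t12 * t21) = 1 := by
  subst h11 h12 h21 h22
  have t12_comm_t21 : (α • k) * ((-(p * α⁻¹)) • k) = ((-(p * α⁻¹)) • k) * (α • k) :=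
    (((Commute.refl k).smul_left α).smul_right _).eq
  have t21_mul_t12 : ((-(p * α⁻¹)) • k) * (α • k) = (-p) • (k * k) := by
    rw [smul_mul_smul_comm, neg_mul, inv_mul_cancel_right₀ hα]
  refine ⟨smul_mul_smul_eq_smul_of_mul_eq_smul h.am_mul_k _ _,
    smul_mul_smul_eq_smul_of_mul_eq_smul h.k_mul_ap _ _,
    smul_mul_smul_eq_smul_of_mul_eq_smul h.am_mul_k _ _,
    smul_mul_smul_eq_smul_of_mul_eq_smul h.k_mul_ap _ _, t12_comm_t21, ?_, ?_⟩
  · have coeff_eq : 1 - p ^ 2 = (p - p⁻¹) * -p := by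
      field_simp
      ring
    rw [smul_mul_inv_smul₀ hμ, inv_smul_mul_smul₀ hμ, h.am_mul_ap_sub_ap_mul_am, t21_mul_t12,
      smul_smul, coeff_eq]
  · rw [smul_mul_inv_smul₀ hμ, h.am_mul_ap, t12_comm_t21, t21_mul_t12, smul_smul, mul_neg, ← sq p,
      neg_smul, sub_neg_eq_add, sub_add_cancel]

end QOscillator

theorem q_ne_zero : q ≠ 0 := RatFunc.X_ne_zero

theorem end_ext_ket {f g : Module.End K F} (h : ∀ m, f (ket m) = g (ket m)) : f = g :=
  Finsupp.lhom_ext' fun m => LinearMap.ext_ring (h m)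

theorem opK_ket (m : ℕ) : opK (ket m) = q ^ m • ket m := by
  simp [opK, ket, -Finsupp.smul_single]

theorem opAp_ket (m : ℕ) : opAp (ket m) = ket (m + 1) := by
  simp [opAp, ket]

theorem opAm_ket_zero : opAm (ket 0) = 0 := by
  simp [opAm, ket]

theorem opAm_ket_succ (m : ℕ) : opAm (ket (m + 1)) = (1 - q ^ (2 * (m + 1))) • ket m := by
  simp [opAm, ket]

theorem opK_mul_opK_ket (m : ℕ) : (opK * opK) (ket m) = q ^ (2 * m) • ket m := by
  rw [Module.End.mul_apply, opK_ket, map_smul, opK_ket, smul_smul, ← pow_add, two_mul]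

theorem opK_mul_opAp : opK * opAp = q • (opAp * opK) := by
  refine end_ext_ket fun m => ?_
  simp only [Module.End.mul_apply, LinearMap.smul_apply, map_smul, opK_ket, opAp_ket, smul_smul,
    pow_succ']

theorem opAm_mul_opK : opAm * opK = q • (opK * opAm) := by
  refine end_ext_ket fun m => ?_
  cases m with
  | zero =>
    simp only [Module.End.mul_apply, LinearMap.smul_apply, map_smul, opK_ket, opAm_ket_zero,
      map_zero, smul_zero]
  | succ m =>
    simp only [Module.End.mul_apply, LinearMap.smul_apply, map_smul, opK_ket, opAm_ket_succ,
      smul_smul]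
    ring_nf

theorem opAp_mul_opAm : opAp * opAm = 1 - opK * opK := by
  refine end_ext_ket fun m => ?_
  rw [LinearMap.sub_apply, Module.End.one_apply, opK_mul_opK_ket]
  cases m with
  | zero =>
    rw [Module.End.mul_apply, opAm_ket_zero, map_zero, mul_zero, pow_zero, one_smul, sub_self]
  | succ m =>
    rw [Module.End.mul_apply, opAm_ket_succ, map_smul, opAp_ket, sub_smul, one_smul]

theorem opAm_mul_opAp : opAm * opAp = 1 - q ^ 2 • (opK * opK) := by
  refine end_ext_ket fun m => ?_
  rw [LinearMap.sub_apply, Module.End.one_apply, LinearMap.smul_apply, opK_mul_opK_ket,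
    Module.End.mul_apply, opAp_ket, opAm_ket_succ, sub_smul, one_smul, smul_smul, ← pow_add,
    mul_add_one, add_comm 2]

theorem isQOscillator_opK_opAp_opAm : IsQOscillator q opK opAp opAm where
  k_mul_ap := opK_mul_opAp
  am_mul_k := opAm_mul_opK
  ap_mul_am := opAp_mul_opAm
  am_mul_ap := opAm_mul_opAp

/-- the fundamental representation of `A_q(A₁)` on the Fock space. -/
theorem statement1 (α μ : K) (hα : α ≠ 0) (hμ : μ ≠ 0)
    (t11 t12 t21 t22 : Module.End K F)
    (h11 : t11 = μ • opAm) (h12 : t12 = α • opK)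
    (h21 : t21 = (-(q * α⁻¹)) • opK) (h22 : t22 = μ⁻¹ • opAp) :
    t11 * t21 = q • (t21 * t11) ∧
    t12 * t22 = q • (t22 * t12) ∧
    t11 * t12 = q • (t12 * t11) ∧
    t21 * t22 = q • (t22 * t21) ∧
    t12 * t21 = t21 * t12 ∧
    t11 * t22 - t22 * t11 = (q - q⁻¹) • (t21 * t12) ∧
    t11 * t22 - q • (t12 * t21) = 1 :=
  statement1_general isQOscillator_opK_opAp_opAm q_ne_zero hα hμ h11 h12 h21 h22
end
end

section
/- Let k, a⁺, a⁻ be the K-linear operators on the Fock space F defined by k|m⟩ = q^m|m⟩, a⁺|m⟩ = |m+1⟩, a⁻|m⟩ = (1 − q^{2m})|m−1⟩ (with a⁻|0⟩ = 0). Then F is irreducible under these operators: every nonzero K-subspace W of F satisfying k(W) ⊆ W, a⁺(W) ⊆ W and a⁻(W) ⊆ W equals F. -/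
noncomputable section

/-!
Repeatedly lowering a nonzero vector of an invariant subspace must end at a nonzero vector killed by
the lowering operator, since that operator sends every vector to zero after finitely many steps. As
`q` is not a root of unity, such a vector is a multiple of the vacuum `|0⟩`. The subspace therefore
contains the vacuum, and raising it produces all of the basis.
-/

section LocallyNilpotent

variable {R M : Type*} [Semiring R] [AddCommMonoid M] [Module R M] {f : Module.End R M}

theorem exists_pow_apply_eq_zero_of_span_eq_top {s : Set M} (hs : Submodule.span R s = ⊤)
    (hf : ∀ x ∈ s, ∃ n, (f ^ n) x = 0) (x : M) : ∃ n, (f ^ n) x = 0 := by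
  have hx : x ∈ Submodule.span R s := hs ▸ Submodule.mem_top
  induction hx using Submodule.span_induction with
  | mem x hx => exact hf x hx
  | zero => exact ⟨0, map_zero _⟩
  | add x y _ _ ihx ihy =>
    obtain ⟨m, hm⟩ := ihx
    obtain ⟨n, hn⟩ := ihy
    refine ⟨max m n, ?_⟩
    rw [map_add, Module.End.pow_map_zero_of_le (le_max_left m n) hm,
      Module.End.pow_map_zero_of_le (le_max_right m n) hn, add_zero]
  | smul a x _ ih =>
    obtain ⟨n, hn⟩ := ih
    exact ⟨n, by rw [map_smul, hn, smul_zero]⟩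

theorem exists_mem_ne_zero_apply_eq_zero_of_pow_apply_eq_zero {W : Submodule R M}
    (hfW : ∀ x ∈ W, f x ∈ W) {n : ℕ} {x : M} (hxW : x ∈ W) (hx : x ≠ 0) (hn : (f ^ n) x = 0) :
    ∃ y ∈ W, y ≠ 0 ∧ f y = 0 := by
  induction n generalizing x with
  | zero => exact absurd hn hx
  | succ n ih =>
    by_cases hfx : f x = 0
    · exact ⟨x, hxW, hx, hfx⟩
    · exact ih (hfW x hxW) hfx (by rwa [pow_succ] at hn)

end LocallyNilpotent

section WeightedShift

variable {R M : Type*} [Semiring R] [AddCommMonoid M] [Module R M]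
  {b : Module.Basis ℕ R M} {c : ℕ → R} {lower : Module.End R M}

theorem exists_pow_lower_apply_eq_zero (h_zero : lower (b 0) = 0)
    (h_succ : ∀ m, lower (b (m + 1)) = c m • b m) (x : M) : ∃ n, (lower ^ n) x = 0 := by
  refine exists_pow_apply_eq_zero_of_span_eq_top b.span_eq ?_ x
  rintro _ ⟨m, rfl⟩
  refine ⟨m + 1, ?_⟩
  induction m with
  | zero => rwa [zero_add, pow_one]
  | succ m ih => rw [pow_succ, Module.End.mul_apply, h_succ, map_smul, ih, smul_zero]

theorem repr_lower_apply (h_zero : lower (b 0) = 0)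
    (h_succ : ∀ m, lower (b (m + 1)) = c m • b m) (x : M) (m : ℕ) :
    b.repr (lower x) m = b.repr x (m + 1) * c m := by
  have h_comp : b.coord m ∘ₗ lower = LinearMap.toSpanSingleton R R (c m) ∘ₗ b.coord (m + 1) := by
    refine b.ext fun n => ?_
    cases n with
    | zero => simp [h_zero]
    | succ n => by_cases hnm : n = m <;> simp [h_succ, hnm]
  exact LinearMap.congr_fun h_comp x

theorem repr_zero_smul_eq_self_of_lower_eq_zero [NoZeroDivisors R] (hc : ∀ m, c m ≠ 0)
    (h_zero : lower (b 0) = 0) (h_succ : ∀ m, lower (b (m + 1)) = c m • b m) {x : M}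
    (hx : lower x = 0) : b.repr x 0 • b 0 = x := by
  have h_repr_succ (m : ℕ) : b.repr x (m + 1) = 0 := by
    have h := repr_lower_apply h_zero h_succ x m
    rw [hx, map_zero, Finsupp.zero_apply] at h
    exact (mul_eq_zero.mp h.symm).resolve_right (hc m)
  refine b.ext_elem fun m => ?_
  cases m with
  | zero => simp
  | succ m => simp [h_repr_succ]

end WeightedShift

theorem statement2_general {𝕜 V : Type*} [DivisionRing 𝕜] [AddCommGroup V] [Module 𝕜 V]
    (b : Module.Basis ℕ 𝕜 V) {c : ℕ → 𝕜} (hc : ∀ m, c m ≠ 0) {raise lower : Module.End 𝕜 V}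
    (h_raise : ∀ m, raise (b m) = b (m + 1)) (h_lower_zero : lower (b 0) = 0)
    (h_lower_succ : ∀ m, lower (b (m + 1)) = c m • b m) {W : Submodule 𝕜 V} (hW : W ≠ ⊥)
    (hWr : ∀ x ∈ W, raise x ∈ W) (hWl : ∀ x ∈ W, lower x ∈ W) : W = ⊤ := by
  obtain ⟨x, hxW, hx⟩ := W.ne_bot_iff.mp hW
  obtain ⟨n, hn⟩ := exists_pow_lower_apply_eq_zero h_lower_zero h_lower_succ x
  obtain ⟨y, hyW, hy, hly⟩ :=
    exists_mem_ne_zero_apply_eq_zero_of_pow_apply_eq_zero hWl hxW hx hn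
  have hy_smul : b.repr y 0 • b 0 = y :=
    repr_zero_smul_eq_self_of_lower_eq_zero hc h_lower_zero h_lower_succ hly
  have hy_coeff : b.repr y 0 ≠ 0 := fun h => hy (by rw [← hy_smul, h, zero_smul])
  have h_mem (m : ℕ) : b m ∈ W := by
    induction m with
    | zero => exact (W.smul_mem_iff hy_coeff).mp (by rwa [hy_smul])
    | succ m ih => exact h_raise m ▸ hWr _ ih
  rw [eq_top_iff, ← b.span_eq, Submodule.span_le]
  exact Set.range_subset_iff.mpr h_mem

theorem ratFunc_X_pow_ne_one {k : Type*} [Field k] {n : ℕ} (hn : n ≠ 0) :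
    (RatFunc.X : RatFunc k) ^ n ≠ 1 := fun h =>
  RatFunc.transcendental_X.pow (Nat.pos_of_ne_zero hn) (h ▸ isAlgebraic_one)

theorem opAm_ket (m : ℕ) : opAm (ket m) = (1 - q ^ (2 * m)) • ket (m - 1) := by
  simp [opAm, ket]

/-- the Fock space is irreducible under `k, a⁺, a⁻`. -/
theorem statement2 (W : Submodule K F) (hW : W ≠ ⊥)
    (hk : ∀ x ∈ W, opK x ∈ W) (hp : ∀ x ∈ W, opAp x ∈ W) (hm : ∀ x ∈ W, opAm x ∈ W) :
    W = ⊤ := by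
  exact statement2_general Finsupp.basisSingleOne
    (fun m => sub_ne_zero.mpr (ratFunc_X_pow_ne_one (by omega)).symm)
    opAp_ket opAm_ket_zero (fun m => opAm_ket (m + 1)) hW hp hm
end
end

section
/- In U = U_q⁺(A₂), write B(a,b,c) = b₁^a b₂^b b₃^c for a,b,c ∈ ℕ, with the convention that any term B(a',b',c') having a negative index is read as 0 (its scalar coefficient then vanishes). Then: B(a,b,c)·e₁ = B(a,b,c+1); B(a,b,c)·e₂ = q^{c−b} B(a+1,b,c) + [c]₁ B(a,b+1,c−1); e₁·B(a,b,c) = q^{a−b} B(a,b,c+1) + [a]₁ B(a−1,b+1,c); and e₂·B(a,b,c) = B(a+1,b,c). -/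
noncomputable section

/-- The `q`-integer `[m]₁ = (q^m - q^{-m})/(q - q⁻¹)`. -/
def qint (n : ℕ) : K := (q ^ n - q⁻¹ ^ n) / (q - q⁻¹)

/-- Generators of the free algebra on two letters. -/
def g (i : Fin 2) : FreeAlgebra K (Fin 2) := FreeAlgebra.ι K i

/-- The `q`-Serre relations of type `A₂`. -/
inductive SerreA2 : FreeAlgebra K (Fin 2) → FreeAlgebra K (Fin 2) → Prop
  | rel1 : SerreA2
      (g 0 * g 0 * g 1 - (q + q⁻¹) • (g 0 * g 1 * g 0) + g 1 * g 0 * g 0) 0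
  | rel2 : SerreA2
      (g 1 * g 1 * g 0 - (q + q⁻¹) • (g 1 * g 0 * g 1) + g 0 * g 1 * g 1) 0

/-- `U_q⁺(A₂)`: the free algebra on `e₁, e₂` modulo the `q`-Serre relations. -/
abbrev UA2 : Type := RingQuot SerreA2

/-- The Chevalley generator `e₁`. -/
def e1 : UA2 := RingQuot.mkAlgHom K SerreA2 (g 0)

/-- The Chevalley generator `e₂`. -/
def e2 : UA2 := RingQuot.mkAlgHom K SerreA2 (g 1)

/-- The root vector `b₁ = e₂`. -/
def b1 : UA2 := e2

/-- The root vector `b₂ = e₁e₂ − q e₂e₁`. -/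
def b2 : UA2 := e1 * e2 - q • (e2 * e1)

/-- The root vector `b₃ = e₁`. -/
def b3 : UA2 := e1

/-- The PBW monomial `B(a,b,c) = b₁^a b₂^b b₃^c`. -/
def Bmon (a b c : ℕ) : UA2 := b1 ^ a * b2 ^ b * b3 ^ c

/-!
With `z = [x, y]_r = x y - r y x`, the Serre relations
`x x y - (r + s) x y x + r s y x x = 0` and `x y y - (r + s) y x y + r s y y x = 0` factor as
`[x, z]_s = 0` and `[z, y]_s = 0`. Thus `x` moves past `z`, and `z` past `y`, up to a factor `s`,
while each exchange `x y = r y x + z` produces one extra `z`. Moving `y` to the left through `x ^ c`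
therefore creates `c` terms proportional to `z x ^ (c - 1)`, whose coefficients add up to
`∑ i < c, r ^ i s ^ (c - 1 - i)`; for `r = q` and `s = q⁻¹` this geometric sum is the quantum
integer `[c]`.
-/

section Monoid

open MulOpposite

variable {M : Type*} [Monoid M] {x y z : M}

/-- The ordered monomial `y ^ a * z ^ b * x ^ c`; for the root vectors `b₁, b₂, b₃` of
`U_q⁺(A₂)` these are the PBW monomials. -/
def orderedMonomial (y z x : M) (a b c : ℕ) : M := y ^ a * z ^ b * x ^ c

theorem orderedMonomial_mul_last (a b c : ℕ) :
    orderedMonomial y z x a b c * x = orderedMonomial y z x a b (c + 1) := by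
  rw [orderedMonomial, orderedMonomial, mul_assoc, ← pow_succ]

theorem first_mul_orderedMonomial (a b c : ℕ) :
    y * orderedMonomial y z x a b c = orderedMonomial y z x (a + 1) b c := by
  simp only [orderedMonomial, pow_succ', mul_assoc]

theorem op_orderedMonomial (a b c : ℕ) :
    op (orderedMonomial y z x a b c) = orderedMonomial (op x) (op z) (op y) c b a := by
  simp only [orderedMonomial, op_mul, op_pow, mul_assoc]

theorem pow_mul_of_semiconjBy_smul {R : Type*} [Monoid R] [MulAction R M] [IsScalarTower R M M]
    [SMulCommClass R M M] {t : R} (h : SemiconjBy z y (t • y)) (n : ℕ) :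
    z ^ n * y = t ^ n • (y * z ^ n) := by
  have h' : SemiconjBy y (t • z) z := by
    rw [SemiconjBy, mul_smul_comm, ← smul_mul_assoc, h.eq]
  rw [← (h'.pow_right n).eq, smul_pow, mul_smul_comm]

end Monoid

section Straightening

open MulOpposite

variable {R A : Type*} [CommRing R] [Ring A] [Algebra R A] {r s t : R} {x y z : A}

theorem pow_mul_of_mul_eq_smul_add (hxy : x * y = r • (y * x) + z)
    (hxz : SemiconjBy x z (s • z)) (n : ℕ) :
    x ^ n * y = r ^ n • (y * x ^ n) +
      (∑ i ∈ Finset.range n, r ^ i * s ^ (n - 1 - i)) • (z * x ^ (n - 1)) := by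
  rcases n with _ | n
  · simp
  rw [Nat.add_sub_cancel]
  induction n with
  | zero => simp [hxy]
  | succ n ih =>
    have hxyx : x * (y * x ^ (n + 1)) = r • (y * x ^ (n + 2)) + z * x ^ (n + 1) := by
      rw [← mul_assoc, hxy, add_mul, smul_mul_assoc, mul_assoc, ← pow_succ']
    have hxzx : x * (z * x ^ n) = s • (z * x ^ (n + 1)) := by
      rw [← mul_assoc, hxz.eq, smul_mul_assoc, smul_mul_assoc, mul_assoc, ← pow_succ']
    calc x ^ (n + 2) * y
      _ = x * (x ^ (n + 1) * y) := by rw [pow_succ', mul_assoc]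
      _ = r ^ (n + 1) • (x * (y * x ^ (n + 1))) +
          (∑ i ∈ Finset.range (n + 1), r ^ i * s ^ (n - i)) • (x * (z * x ^ n)) := by
        rw [ih, mul_add, mul_smul_comm, mul_smul_comm]
      _ = r ^ (n + 2) • (y * x ^ (n + 2)) +
          (∑ i ∈ Finset.range (n + 2), r ^ i * s ^ (n + 1 - i)) • (z * x ^ (n + 1)) := by
        rw [hxyx, hxzx, geom_sum₂_succ_eq r s (n := n + 1), Nat.add_sub_cancel]
        module

theorem orderedMonomial_mul_first (hxy : x * y = r • (y * x) + z)
    (hxz : SemiconjBy x z (s • z)) (hzy : SemiconjBy z y (t • y)) (a b c : ℕ) :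
    orderedMonomial y z x a b c * y =
      (r ^ c * t ^ b) • orderedMonomial y z x (a + 1) b c +
        (∑ i ∈ Finset.range c, r ^ i * s ^ (c - 1 - i)) •
          orderedMonomial y z x a (b + 1) (c - 1) := by
  have hy : y ^ a * z ^ b * (y * x ^ c) = t ^ b • orderedMonomial y z x (a + 1) b c := by
    rw [← mul_assoc, mul_assoc (y ^ a), pow_mul_of_semiconjBy_smul hzy, mul_smul_comm,
      smul_mul_assoc, ← mul_assoc, ← pow_succ, orderedMonomial]
  have hz : y ^ a * z ^ b * (z * x ^ (c - 1)) = orderedMonomial y z x a (b + 1) (c - 1) := by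
    rw [orderedMonomial, pow_succ, ← mul_assoc, ← mul_assoc]
  rw [orderedMonomial, mul_assoc _ (x ^ c), pow_mul_of_mul_eq_smul_add hxy hxz, mul_add,
    mul_smul_comm, mul_smul_comm, hy, hz, smul_smul]

theorem last_mul_orderedMonomial (hxy : x * y = r • (y * x) + z)
    (hxz : SemiconjBy x z (s • z)) (hzy : SemiconjBy z y (t • y)) (a b c : ℕ) :
    x * orderedMonomial y z x a b c =
      (r ^ a * s ^ b) • orderedMonomial y z x a b (c + 1) +
        (∑ i ∈ Finset.range a, r ^ i * t ^ (a - 1 - i)) •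
          orderedMonomial y z x (a - 1) (b + 1) c := by
  -- In the opposite algebra the three relations hold with `x`, `y` and `s`, `t` exchanged.
  apply op_injective
  simp only [op_mul, op_add, op_smul, op_orderedMonomial]
  refine orderedMonomial_mul_first ?_ ?_ ?_ c b a
  · rw [← op_mul, hxy, op_add, op_smul, op_mul]
  · rw [SemiconjBy, ← op_mul, hzy.eq, smul_mul_assoc, smul_mul_assoc, op_smul, op_mul]
  · rw [SemiconjBy, ← op_mul, hxz.eq, smul_mul_assoc, smul_mul_assoc, op_smul, op_mul]

/-- The skew commutator `[x, y]_r = x y - r y x`; the root vector `b₂` is `[e₁, e₂]_q`. -/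
def skewCommutator (r : R) (x y : A) : A := x * y - r • (y * x)

theorem mul_eq_smul_add_skewCommutator (r : R) (x y : A) :
    x * y = r • (y * x) + skewCommutator r x y :=
  (add_sub_cancel _ _).symm

theorem skewCommutator_eq_zero_iff {r : R} {x y : A} :
    skewCommutator r x y = 0 ↔ SemiconjBy x y (r • y) := by
  rw [skewCommutator, sub_eq_zero, SemiconjBy, smul_mul_assoc]

theorem skewCommutator_skewCommutator_self_left (r s : R) (x y : A) :
    skewCommutator s x (skewCommutator r x y) =
      x * x * y - (r + s) • (x * y * x) + (r * s) • (y * x * x) := by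
  simp only [skewCommutator, mul_sub, sub_mul, smul_sub, mul_smul_comm, smul_mul_assoc, add_smul,
    mul_smul, smul_comm s r, mul_assoc]
  abel

theorem skewCommutator_skewCommutator_self_right (r s : R) (x y : A) :
    skewCommutator s (skewCommutator r x y) y =
      x * y * y - (r + s) • (y * x * y) + (r * s) • (y * y * x) := by
  simp only [skewCommutator, mul_sub, sub_mul, smul_sub, mul_smul_comm, smul_mul_assoc, add_smul,
    mul_smul, smul_comm s r, mul_assoc]
  abel

/- For `r = q` and `s = q⁻¹` the hypotheses are the `q`-Serre relations; for general `r` and `s`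
they are those of the two-parameter quantum group of type `A₂`. -/
theorem statement6_general (r s : R) (x y : A)
    (hxxy : x * x * y - (r + s) • (x * y * x) + (r * s) • (y * x * x) = 0)
    (hxyy : x * y * y - (r + s) • (y * x * y) + (r * s) • (y * y * x) = 0) (a b c : ℕ) :
    let B := orderedMonomial y (skewCommutator r x y) x
    B a b c * x = B a b (c + 1) ∧
    B a b c * y = (r ^ c * s ^ b) • B (a + 1) b c +
      (∑ i ∈ Finset.range c, r ^ i * s ^ (c - 1 - i)) • B a (b + 1) (c - 1) ∧
    x * B a b c = (r ^ a * s ^ b) • B a b (c + 1) +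
      (∑ i ∈ Finset.range a, r ^ i * s ^ (a - 1 - i)) • B (a - 1) (b + 1) c ∧
    y * B a b c = B (a + 1) b c := by
  have hxy := mul_eq_smul_add_skewCommutator r x y
  have hxz : SemiconjBy x (skewCommutator r x y) (s • skewCommutator r x y) :=
    skewCommutator_eq_zero_iff.mp <| (skewCommutator_skewCommutator_self_left r s x y).trans hxxy
  have hzy : SemiconjBy (skewCommutator r x y) y (s • y) :=
    skewCommutator_eq_zero_iff.mp <| (skewCommutator_skewCommutator_self_right r s x y).trans hxyy
  exact ⟨orderedMonomial_mul_last a b c, orderedMonomial_mul_first hxy hxz hzy a b c,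
    last_mul_orderedMonomial hxy hxz hzy a b c, first_mul_orderedMonomial a b c⟩

end Straightening

theorem q_ne_inv : q ≠ q⁻¹ := by
  intro h
  have hdeg := congrArg RatFunc.intDegree h
  rw [RatFunc.intDegree_inv, q, RatFunc.intDegree_X] at hdeg
  norm_num at hdeg

theorem q_zpow_natCast_sub_natCast (m n : ℕ) : q ^ ((m : ℤ) - n) = q ^ m * q⁻¹ ^ n := by
  rw [zpow_sub₀ q_ne_zero, zpow_natCast, zpow_natCast, inv_pow, div_eq_mul_inv]

theorem qint_eq_geom_sum₂ (n : ℕ) :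
    qint n = ∑ i ∈ Finset.range n, q ^ i * q⁻¹ ^ (n - 1 - i) :=
  (geom₂_sum q_ne_inv n).symm

theorem serre_e1_e1_e2 :
    e1 * e1 * e2 - (q + q⁻¹) • (e1 * e2 * e1) + (q * q⁻¹) • (e2 * e1 * e1) = 0 := by
  simpa only [map_add, map_sub, map_mul, map_smul, map_zero, mul_inv_cancel₀ q_ne_zero, one_smul]
    using! RingQuot.mkAlgHom_rel K SerreA2.rel1

theorem serre_e1_e2_e2 :
    e1 * e2 * e2 - (q + q⁻¹) • (e2 * e1 * e2) + (q * q⁻¹) • (e2 * e2 * e1) = 0 := by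
  have h : e2 * e2 * e1 - (q + q⁻¹) • (e2 * e1 * e2) + e1 * e2 * e2 = 0 := by
    simpa only [map_add, map_sub, map_mul, map_smul, map_zero]
      using! RingQuot.mkAlgHom_rel K SerreA2.rel2
  rw [mul_inv_cancel₀ q_ne_zero, one_smul, ← h]
  abel

/-- multiplication of PBW monomials of `U_q⁺(A₂)` by the generators.
(Terms with a negative index appear with vanishing coefficient, so truncated
subtraction on `ℕ` realizes the stated convention.) -/
theorem statement6 (a b c : ℕ) :
    Bmon a b c * e1 = Bmon a b (c + 1) ∧
    Bmon a b c * e2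
      = (q ^ ((c : ℤ) - b)) • Bmon (a + 1) b c + qint c • Bmon a (b + 1) (c - 1) ∧
    e1 * Bmon a b c
      = (q ^ ((a : ℤ) - b)) • Bmon a b (c + 1) + qint a • Bmon (a - 1) (b + 1) c ∧
    e2 * Bmon a b c = Bmon (a + 1) b c := by
  simp only [qint_eq_geom_sum₂, q_zpow_natCast_sub_natCast]
  exact statement6_general q q⁻¹ e1 e2 serre_e1_e1_e2 serre_e1_e2_e2 a b c
end
end
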